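/- Let q be an odd prime power and r ≥ 4 even, and let B be the hypersurface of PG(r,q²) defined below with 4α^{q+1}+(β^q−β)² a non-square in GF(q). Then |B| = q^{2r−1}+(q^{2(r−1)}−q²)/(q²−1)+1, and for every hyperplane Σ of PG(r,q²) the cardinality |B ∩ Σ| belongs to the set {n₁, n₂, n₃, n₄, n₅}, where n₁ = q²(q^{2(r−2)}−1)/(q²−1)+1, n₂ = q^{2r−3}−q^{r−1}+q^{r−2}+(q^{2(r−2)}−1)/(q²−1), n₃ = q^{2r−3}+(q^{2(r−2)}−q²)/(q²−1)−q^{r−2}+1, n₄ = q^{2r−3}+(q^{2(r−2)}−q²)/(q²−1)+1, and n₅ = q^{2r−3}+(q^{2(r−2)}−q²)/(q²−1)+q^{r−2}+1. -/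

import Mathlib

/-- The affine equation
`x_r^q − x_r + α^q(x₁^{2q}+⋯+x_{r−1}^{2q}) − α(x₁²+⋯+x_{r−1}²)
  = (β^q−β)(x₁^{q+1}+⋯+x_{r−1}^{q+1})`. -/
def affEq {F : Type*} [Field F] (q r : ℕ) (α β : F) (x : Fin (r + 1) → F) : Prop :=
  x (Fin.last r) ^ q - x (Fin.last r)
      + α ^ q * (∑ i : Fin (r + 1), if 1 ≤ i.1 ∧ i.1 < r then x i ^ (2 * q) else 0)
      - α * (∑ i : Fin (r + 1), if 1 ≤ i.1 ∧ i.1 < r then x i ^ 2 else 0)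
    = (β ^ q - β) * (∑ i : Fin (r + 1), if 1 ≤ i.1 ∧ i.1 < r then x i ^ (q + 1) else 0)

/-- The hypersurface `B` of `PG(r,q²)`: the affine points (X₀ ≠ 0) whose affine
coordinates satisfy `affEq`, together with the points at infinity (X₀ = 0)
satisfying `X₁² + ⋯ + X_{r−1}² = 0`. -/
noncomputable def Bset (F : Type*) [Field F] (q r : ℕ) (α β : F) :
    Set (Projectivization F (Fin (r + 1) → F)) :=
  {P | (P.rep 0 ≠ 0 ∧ affEq q r α β fun i => P.rep i / P.rep 0) ∨
       (P.rep 0 = 0 ∧ (∑ i : Fin (r + 1), if 1 ≤ i.1 ∧ i.1 < r then P.rep i ^ 2 else 0) = 0)}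

/-!
Write `φ` for the involution `x ↦ x ^ q`, and call `v` skew if `φ v = -v`. The affine equation reads
`φ z - z + ∑ i, s (x i) = 0` for a form `s` with skew values, and it has `q` solutions `z` for every
`x`. Since `4 α ^ (q + 1) + (β ^ q - β) ^ 2` is a non-square, its square roots are skew, and one of
them provides a skew `κ` with `-κ * s x = N (κ * φ x - α * x)`, where `N z = φ z * z`. Hence `s`
takes every nonzero skew value equally often, a property which is inherited by `∑ i, s (x i)`.
A hyperplane through `(0 : … : 0 : 1)` is a cylinder in the direction of `z`; on any other one, `z`
is an affine function of `x`, and completing the square turns the equation into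
`∑ i, s (x i) = d`. At infinity one counts the zeros of `∑ i, x i ^ 2`, or of its restriction to a
hyperplane; as `-1` is a square, this form is a sum of hyperbolic planes and one square.
-/

section Counting

variable {X Y : Type*}

theorem natCard_subtype_eq_sum_ite [Fintype X] (P : X → Prop) [DecidablePred P] :
    (Nat.card {x // P x} : ℤ) = ∑ x, if P x then 1 else 0 := by
  rw [Nat.card_eq_fintype_card, Fintype.card_subtype, Finset.sum_boole]

theorem natCard_subtype_prod [Fintype X] [Finite Y] (P : X → Y → Prop) :
    Nat.card {p : X × Y // P p.1 p.2} = ∑ x, Nat.card {y // P x y} := by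
  rw [Nat.card_congr (Equiv.subtypeProdEquivSigmaSubtype P), Nat.card_sigma]

theorem natCard_subtype_and [Finite X] [Finite Y] {P : X → Prop} {R : X → Y → Prop} {n : ℕ}
    (h : ∀ x, P x → Nat.card {y // R x y} = n) :
    Nat.card {p : X × Y // P p.1 ∧ R p.1 p.2} = n * Nat.card {x // P x} := by
  classical
  have := Fintype.ofFinite X
  have hfiber (x : X) : Nat.card {y // P x ∧ R x y} = if P x then n else 0 := by
    split_ifs with hx <;> simp [hx, h]
  rw [natCard_subtype_prod fun x y => P x ∧ R x y, Finset.sum_congr rfl fun x _ => hfiber x,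
    Nat.card_eq_fintype_card, Fintype.card_subtype, Finset.card_filter, Finset.mul_sum]
  simp only [mul_ite, mul_one, mul_zero]

theorem natCard_graph (f : X → Y) (R : X → Y → Prop) :
    Nat.card {p : X × Y // p.2 = f p.1 ∧ R p.1 p.2} = Nat.card {x // R x (f x)} :=
  Nat.card_congr
    { toFun := fun p => ⟨p.1.1, p.2.1 ▸ p.2.2⟩
      invFun := fun x => ⟨(x, f x), rfl, x.2⟩
      left_inv := fun p => Subtype.ext (Prod.ext rfl p.2.1.symm)
      right_inv := fun _ => rfl }

theorem sum_natCard_subtype_comm [Fintype X] [Fintype Y] (P : X → Y → Prop) :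
    ∑ x, Nat.card {y // P x y} = ∑ y, Nat.card {x // P x y} := by
  rw [← natCard_subtype_prod, ← natCard_subtype_prod fun y x => P x y]
  exact Nat.card_congr ((Equiv.prodComm X Y).subtypeEquiv fun _ => Iff.rfl)

theorem natCard_range_mul_natCard_fiber [AddGroup X] [AddGroup Y] (f : X →+ Y) (x : X) :
    Nat.card f.range * Nat.card {y // f y = f x} = Nat.card X := by
  have hfiber : Nat.card {y // f y = f x} = Nat.card f.ker := Nat.card_congr (f.fiberEquivKer x)
  rw [hfiber, ← f.ker.card_mul_index, AddSubgroup.index_ker, mul_comm]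

theorem natCard_mul_natCard_dual_fiber {K V : Type*} [Field K] [AddCommGroup V] [Module K V]
    {f : Module.Dual K V} (hf : f ≠ 0) (d : K) :
    Nat.card K * Nat.card {x // f x = d} = Nat.card V := by
  have hsurj := LinearMap.surjective hf
  obtain ⟨x, rfl⟩ := hsurj d
  rw [← natCard_range_mul_natCard_fiber f.toAddMonoidHom x,
    AddMonoidHom.range_eq_top.2 hsurj, AddSubgroup.card_top]
  rfl

end Counting

section Excess

variable {X Y A : Type*} [AddCommGroup A] [DecidableEq A]

/-- A map `h : X → A` with values in a subgroup `V` has excess `e` if all fibres over nonzero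
elements of `V` have the same cardinality and the fibre over `0` has `e` more elements. The common
cardinality is then `(|X| - e) / |V|`; multiplying by `|V|` avoids the division. -/
structure HasExcess (V : AddSubgroup A) (h : X → A) (e : ℤ) : Prop where
  mem : ∀ x, h x ∈ V
  card_fiber : ∀ d ∈ V, (Nat.card V : ℤ) * Nat.card {x // h x = d}
    = Nat.card X + e * (Nat.card V * (if d = 0 then 1 else 0) - 1)

namespace HasExcess

variable {V : AddSubgroup A} {h : X → A} {k : Y → A} {e e' : ℤ}

theorem comp_equiv (hh : HasExcess V h e) (σ : Y ≃ X) : HasExcess V (fun y => h (σ y)) e where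
  mem y := hh.mem (σ y)
  card_fiber d hd := by
    rw [Nat.card_congr (σ.subtypeEquiv (q := fun x => h x = d) fun _ => Iff.rfl),
      hh.card_fiber d hd, Nat.card_congr σ]

theorem zero_of_unique [Unique X] : HasExcess V (fun _ : X => (0 : A)) 1 where
  mem _ := V.zero_mem
  card_fiber d _ := by
    rcases eq_or_ne d 0 with rfl | hd
    · simp
    · simp [hd, hd.symm]

theorem card_fiber_add [Finite X] [Finite Y] (hh : HasExcess V h e) (hk : ∀ y, k y ∈ V)
    {d : A} (hd : d ∈ V) :
    (Nat.card V : ℤ) * Nat.card {p : Y × X // k p.1 + h p.2 = d} = Nat.card Y * Nat.card X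
      + e * (Nat.card V * Nat.card {y // k y = d} - Nat.card Y) := by
  have := Fintype.ofFinite Y
  have hfiber (y : Y) : (Nat.card V : ℤ) * Nat.card {x // k y + h x = d}
      = Nat.card X + e * (Nat.card V * (if k y = d then 1 else 0) - 1) := by
    simp only [← eq_sub_iff_add_eq', hh.card_fiber _ (V.sub_mem hd (hk y)), sub_eq_zero,
      @eq_comm A d]
  rw [natCard_subtype_prod fun y x => k y + h x = d, Nat.cast_sum, Finset.mul_sum,
    Finset.sum_congr rfl fun y _ => hfiber y, Finset.sum_add_distrib, ← Finset.mul_sum,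
    Finset.sum_sub_distrib, ← Finset.mul_sum, ← natCard_subtype_eq_sum_ite]
  simp

theorem add [Finite X] [Finite Y] (hk : HasExcess V k e') (hh : HasExcess V h e) :
    HasExcess V (fun p : Y × X => k p.1 + h p.2) (e' * e) where
  mem p := V.add_mem (hk.mem p.1) (hh.mem p.2)
  card_fiber d hd := by
    rw [hh.card_fiber_add hk.mem hd, hk.card_fiber d hd, Nat.card_prod, Nat.cast_mul]
    ring

theorem sum_pi [Finite X] (hh : HasExcess V h e) (n : ℕ) :
    HasExcess V (fun x : Fin n → X => ∑ i, h (x i)) (e ^ n) := by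
  induction n with
  | zero => simpa using zero_of_unique
  | succ n ih =>
    simpa [Fin.sum_univ_succ, pow_succ', Fin.consEquiv, Fin.tail] using
      (hh.add ih).comp_equiv (Fin.consEquiv fun _ => X).symm

end HasExcess

end Excess

section SumsOfSquares

variable {F : Type*} [Field F]

theorem hasExcess_mul [Finite F] [DecidableEq F] :
    HasExcess ⊤ (fun p : F × F => p.1 * p.2) (Nat.card F) where
  mem _ := trivial
  card_fiber d _ := by
    have := Fintype.ofFinite F
    have hfiber (u : F) : (Nat.card {v // u * v = d} : ℤ)
        = 1 + if u = 0 then (Nat.card F : ℤ) * (if d = 0 then 1 else 0) - 1 else 0 := by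
      rcases eq_or_ne u 0 with rfl | hu
      · rcases eq_or_ne d 0 with rfl | hd
        · simp
        · simp [hd, hd.symm]
      · simp [← eq_inv_mul_iff_mul_eq₀ hu, hu]
    rw [natCard_subtype_prod fun u v => u * v = d, Nat.cast_sum,
      Finset.sum_congr rfl fun u _ => hfiber u, Finset.sum_add_distrib, Finset.sum_ite_eq',
      Nat.card_prod, AddSubgroup.card_top]
    simp only [Finset.sum_const, Finset.card_univ, Finset.mem_univ, if_true, nsmul_eq_mul,
      ← Nat.card_eq_fintype_card, Nat.cast_mul]
    ring

/-- If `j² = -1`, the substitution `(x, y) ↦ (x + jy, x - jy)` turns `x² + y²` into a product. -/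
def sqAddSqEquiv (h2 : (2 : F) ≠ 0) {j : F} (hj : j * j = -1) : F × F ≃ F × F where
  toFun p := (p.1 + j * p.2, p.1 - j * p.2)
  invFun p := ((p.1 + p.2) / 2, -j * (p.1 - p.2) / 2)
  left_inv := by
    rintro ⟨x, y⟩
    ext
    · simp only
      field_simp
      ring
    · simp only
      field_simp
      linear_combination (-2 * y) * hj
  right_inv := by
    rintro ⟨x, y⟩
    ext
    · simp only
      field_simp
      linear_combination (-(x - y)) * hj
    · simp only
      field_simp
      linear_combination (x - y) * hj

variable [Finite F] [DecidableEq F]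

theorem hasExcess_mul_self_add_mul_self (h2 : (2 : F) ≠ 0) (hneg : IsSquare (-1 : F)) :
    HasExcess ⊤ (fun p : F × F => p.1 * p.1 + p.2 * p.2) (Nat.card F) := by
  obtain ⟨j, hj⟩ := hneg
  have hfactor (p : F × F) : p.1 * p.1 + p.2 * p.2 = (p.1 + j * p.2) * (p.1 - j * p.2) := by
    linear_combination (-p.2 ^ 2) * hj
  simp only [hfactor]
  exact hasExcess_mul.comp_equiv (sqAddSqEquiv h2 hj.symm)

theorem hasExcess_dotProduct_self (h2 : (2 : F) ≠ 0) (hneg : IsSquare (-1 : F)) (k : ℕ) :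
    HasExcess ⊤ (fun x : Fin (2 * k) → F => x ⬝ᵥ x) ((Nat.card F : ℤ) ^ k) := by
  induction k with
  | zero => simpa using HasExcess.zero_of_unique
  | succ k ih =>
    let σ : (Fin (2 * k + 1 + 1) → F) ≃ (F × F) × (Fin (2 * k) → F) :=
      ((Equiv.prodAssoc _ _ _).trans (((Equiv.refl F).prodCongr (Fin.consEquiv fun _ => F)).trans
        (Fin.consEquiv fun _ => F))).symm
    change HasExcess ⊤ (fun x : Fin (2 * k + 1 + 1) → F => x ⬝ᵥ x) _
    simpa [dotProduct, Fin.sum_univ_succ, pow_succ', add_assoc, σ, Fin.consEquiv, Fin.tail] using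
      ((hasExcess_mul_self_add_mul_self h2 hneg).add ih).comp_equiv σ

end SumsOfSquares

section Quadric

variable {F : Type*} [Field F]

theorem natCard_mul_self_eq [Fintype F] [DecidableEq F] (h2 : (2 : F) ≠ 0) (d : F) :
    (Nat.card {x : F // x * x = d} : ℤ) = quadraticChar F d + 1 := by
  have hchar : ringChar F ≠ 2 := fun h =>
    h2 (by simpa [h] using ringChar.Nat.cast_ringChar (R := F))
  rw [← quadraticChar_card_sqrts hchar, ← Nat.card_eq_card_toFinset]
  simp only [sq, Set.coe_ofPred]

theorem natCard_dotProduct_self_eq [Fintype F] [DecidableEq F] (h2 : (2 : F) ≠ 0)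
    (hneg : IsSquare (-1 : F)) (k : ℕ) (d : F) :
    (Nat.card {x : Fin (2 * k + 1) → F // x ⬝ᵥ x = d} : ℤ)
      = (Nat.card F : ℤ) ^ (2 * k) + (Nat.card F : ℤ) ^ k * quadraticChar F d := by
  have hcons : Nat.card {x : Fin (2 * k + 1) → F // x ⬝ᵥ x = d}
      = Nat.card {p : F × (Fin (2 * k) → F) // p.1 * p.1 + p.2 ⬝ᵥ p.2 = d} :=
    Nat.card_congr <| (Fin.consEquiv fun _ => F).symm.subtypeEquiv fun x => by
      simp [dotProduct, Fin.sum_univ_succ, Fin.consEquiv, Fin.tail]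
  have hcount := (hasExcess_dotProduct_self h2 hneg k).card_fiber_add (k := fun x : F => x * x)
    (fun _ => trivial) (d := d) trivial
  rw [← hcons, natCard_mul_self_eq h2, AddSubgroup.card_top, Nat.card_fun, Nat.card_fin] at hcount
  have hQ : (Nat.card F : ℤ) ≠ 0 := mod_cast Nat.card_pos.ne'
  apply mul_left_cancel₀ hQ
  push_cast at hcount
  linear_combination hcount

theorem natCard_dotProduct_self_eq_mul {n : ℕ} {t : F} (ht : t ≠ 0) (c : F) :
    Nat.card {x : Fin n → F // x ⬝ᵥ x = t * t * c} = Nat.card {x : Fin n → F // x ⬝ᵥ x = c} := by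
  refine Nat.card_congr ((MulAction.toPerm (Units.mk0 t ht)).symm.subtypeEquiv fun x => ?_)
  have hx : x = t • (Units.mk0 t ht)⁻¹ • x := (smul_inv_smul (Units.mk0 t ht) x).symm
  rw [MulAction.toPerm_symm_apply]
  conv_lhs => rw [hx]
  rw [smul_dotProduct, dotProduct_smul, smul_eq_mul, smul_eq_mul, ← mul_assoc]
  exact mul_right_inj' (mul_ne_zero ht ht)

theorem natCard_pencil {n : ℕ} (b : Fin n → F) (t : F) :
    Nat.card {x : Fin n → F // x ⬝ᵥ x + 2 * t * (b ⬝ᵥ x) = 0}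
      = Nat.card {x : Fin n → F // x ⬝ᵥ x = t * t * (b ⬝ᵥ b)} := by
  refine Nat.card_congr ((Equiv.addRight (t • b)).subtypeEquiv fun x => ?_)
  simp only [Equiv.coe_addRight, add_dotProduct, dotProduct_add, smul_dotProduct, dotProduct_smul,
    smul_eq_mul, dotProduct_comm x b]
  rw [← sub_eq_zero (b := t * t * _)]
  ring_nf

theorem card_mul_natCard_isotropic_orthogonal [Finite F] (h2 : (2 : F) ≠ 0) {n : ℕ}
    (b : Fin n → F) :
    (Nat.card F : ℤ) * Nat.card {x : Fin n → F // x ⬝ᵥ x = 0 ∧ b ⬝ᵥ x = 0}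
        + Nat.card (Fin n → F)
      = Nat.card {x : Fin n → F // b ⬝ᵥ x = 0} + Nat.card {x : Fin n → F // x ⬝ᵥ x = 0}
        + (Nat.card F - 1) * Nat.card {x : Fin n → F // x ⬝ᵥ x = b ⬝ᵥ b} := by
  classical
  have := Fintype.ofFinite F
  -- Both sides count the pairs `(t, x)` with `x ⬝ᵥ x + 2 t (b ⬝ᵥ x) = 0`, fibred over `x` and `t`.
  let incident (t : F) (x : Fin n → F) : Prop := x ⬝ᵥ x + 2 * t * (b ⬝ᵥ x) = 0
  have hfiberx (x : Fin n → F) : (Nat.card {t // incident t x} : ℤ)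
      = Nat.card F * (if x ⬝ᵥ x = 0 ∧ b ⬝ᵥ x = 0 then 1 else 0) + 1
        - if b ⬝ᵥ x = 0 then 1 else 0 := by
    by_cases hb : b ⬝ᵥ x = 0
    · by_cases hx : x ⬝ᵥ x = 0 <;> simp [incident, hb, hx]
    · have hsolve (t : F) : incident t x ↔ t = -(x ⬝ᵥ x) / (2 * (b ⬝ᵥ x)) := by
        rw [eq_div_iff (mul_ne_zero h2 hb), eq_neg_iff_add_eq_zero, add_comm, mul_left_comm,
          ← mul_assoc]
      simp [hsolve, hb]
  have hfibert (t : F) : (Nat.card {x // incident t x} : ℤ)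
      = Nat.card {x : Fin n → F // x ⬝ᵥ x = b ⬝ᵥ b}
        + if t = 0 then (Nat.card {x : Fin n → F // x ⬝ᵥ x = 0} : ℤ)
          - Nat.card {x : Fin n → F // x ⬝ᵥ x = b ⬝ᵥ b} else 0 := by
    rw [natCard_pencil]
    split_ifs with ht
    · simp [ht]
    · rw [natCard_dotProduct_self_eq_mul ht, add_zero]
  have hswap := congrArg (Nat.cast : ℕ → ℤ) (sum_natCard_subtype_comm incident)
  push_cast at hswap
  simp only [hfiberx, hfibert, Finset.sum_add_distrib, Finset.sum_sub_distrib, ← Finset.mul_sum,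
    ← natCard_subtype_eq_sum_ite, Finset.sum_ite_eq', Finset.sum_const, Finset.card_univ,
    Finset.mem_univ, if_true, ← Nat.card_eq_fintype_card, nsmul_eq_mul, mul_one] at hswap
  linear_combination -hswap

theorem card_mul_natCard_isotropic_orthogonal_odd [Fintype F] [DecidableEq F] (h2 : (2 : F) ≠ 0)
    (hneg : IsSquare (-1 : F)) (k : ℕ) {b : Fin (2 * k + 1) → F} (hb : b ≠ 0) :
    (Nat.card F : ℤ) * Nat.card {x : Fin (2 * k + 1) → F // x ⬝ᵥ x = 0 ∧ b ⬝ᵥ x = 0}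
      = (Nat.card F : ℤ) ^ (2 * k)
        + (Nat.card F - 1) * (Nat.card F : ℤ) ^ k * quadraticChar F (b ⬝ᵥ b) := by
  have hb' : dotProductEquiv F (Fin (2 * k + 1)) b ≠ 0 := by simpa
  have hlin := natCard_mul_natCard_dual_fiber hb' 0
  have hpencil := card_mul_natCard_isotropic_orthogonal h2 b
  simp only [dotProductEquiv_apply_apply] at hlin
  rw [natCard_dotProduct_self_eq h2 hneg, natCard_dotProduct_self_eq h2 hneg,
    quadraticChar_zero] at hpencil
  have hQ : (Nat.card F : ℤ) ≠ 0 := mod_cast Nat.card_pos.ne'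
  zify at hlin
  rw [Nat.card_fun, Nat.card_fin] at hlin hpencil
  apply mul_left_cancel₀ hQ
  push_cast at hlin hpencil
  linear_combination (Nat.card F : ℤ) * hpencil + hlin

end Quadric

section Involution

theorem natCard_pow_eq_of_isCyclic {G : Type*} [CommGroup G] [IsCyclic G] [Finite G] {m n : ℕ}
    (hG : Nat.card G = m * n) {v : G} (hv : v ^ m = 1) : Nat.card {u : G // u ^ n = v} = n := by
  have hn : 0 < n := Nat.pos_of_ne_zero (right_ne_zero_of_mul (hG ▸ Nat.card_pos.ne'))
  have hrange : (powMonoidHom n : G →* G).range = (powMonoidHom m).ker := by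
    refine Subgroup.eq_of_le_of_card_ge ?_ ?_
    · rintro _ ⟨u, rfl⟩
      rw [MonoidHom.mem_ker, powMonoidHom_apply, powMonoidHom_apply, ← pow_mul, mul_comm n, ← hG,
        pow_card_eq_one']
    · rw [IsCyclic.card_powMonoidHom_ker, IsCyclic.card_powMonoidHom_range, hG,
        Nat.gcd_mul_right_left, Nat.gcd_mul_left_left, Nat.mul_div_cancel m hn]
  obtain ⟨u, rfl⟩ : v ∈ (powMonoidHom n : G →* G).range := hrange ▸ hv
  calc Nat.card {w // w ^ n = powMonoidHom n u}
      = Nat.card (powMonoidHom n : G →* G).ker :=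
        Nat.card_congr ((powMonoidHom n : G →* G).fiberEquivKer u)
    _ = n := by rw [IsCyclic.card_powMonoidHom_ker, hG, Nat.gcd_mul_left_left]

variable {F : Type*} [Field F] {q : ℕ} {φ : F →+* F}

/-- `φ` is the involutory automorphism `x ↦ x ^ q` of the field with `q ^ 2` elements; its fixed
field is the subfield with `q` elements. -/
structure IsFrobeniusInvolution (φ : F →+* F) (q : ℕ) : Prop where
  natCard_eq : Nat.card F = q ^ 2
  apply_eq_pow : ∀ x, φ x = x ^ q

theorem exists_isFrobeniusInvolution [Finite F] (hF : Nat.card F = q ^ 2) :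
    ∃ φ : F →+* F, IsFrobeniusInvolution φ q := by
  have := Fintype.ofFinite F
  have hprime : IsPrimePow q := by
    rw [← isPrimePow_pow_iff two_ne_zero, ← hF, Nat.card_eq_fintype_card]
    exact FiniteField.isPrimePow_card F
  obtain ⟨p, n, hp, -, rfl⟩ := (isPrimePow_nat_iff q).1 hprime
  have : Fact p.Prime := ⟨hp⟩
  have : CharP F p := charP_of_card_eq_prime_pow (f := n * 2) <| by
    rw [← Nat.card_eq_fintype_card, hF, pow_mul]
  exact ⟨iterateFrobenius F p n, hF, fun x => iterateFrobenius_def p n x⟩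

/-- The additive group of elements `v` with `φ v = -v`. -/
def skewSubgroup (φ : F →+* F) : AddSubgroup F :=
  (φ : F →+ F).eqLocus (-AddMonoidHom.id F)

theorem mem_skewSubgroup {v : F} : v ∈ skewSubgroup φ ↔ φ v = -v := Iff.rfl

namespace IsFrobeniusInvolution

variable (h : IsFrobeniusInvolution φ q)
include h

theorem one_lt [Finite F] : 1 < q :=
  (one_lt_pow_iff_of_nonneg q.zero_le two_ne_zero).1 (h.natCard_eq ▸ Finite.one_lt_card)

theorem apply_apply [Finite F] (x : F) : φ (φ x) = x := by
  have := Fintype.ofFinite F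
  rw [h.apply_eq_pow, h.apply_eq_pow, ← pow_mul, ← sq, ← h.natCard_eq, Nat.card_eq_fintype_card,
    FiniteField.pow_card]

theorem natCard_norm_eq [Finite F] {v : F} (hv : φ v = v) (hv0 : v ≠ 0) :
    Nat.card {z : F // φ z * z = v} = q + 1 := by
  have hunits : Nat.card Fˣ = (q - 1) * (q + 1) := by
    rw [Nat.card_units, h.natCard_eq, mul_comm, ← Nat.sq_sub_sq, one_pow]
  have hpow : Units.mk0 v hv0 ^ (q - 1) = 1 := by
    rw [h.apply_eq_pow, ← Nat.sub_add_cancel h.one_lt.le, pow_succ] at hv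
    exact Units.ext (mul_right_cancel₀ hv0 (hv.trans (one_mul v).symm))
  rw [← natCard_pow_eq_of_isCyclic hunits hpow]
  refine Nat.card_congr
    ⟨fun z => ⟨Units.mk0 z fun hz => hv0 ?_, ?_⟩, fun u => ⟨(u.1 : F), ?_⟩, ?_, ?_⟩
  · rw [← z.2, hz, mul_zero]
  · exact Units.ext (by simp [← z.2, h.apply_eq_pow, pow_succ])
  · rw [h.apply_eq_pow, ← pow_succ, ← Units.val_pow_eq_pow_val, u.2, Units.val_mk0]
  · exact fun _ => rfl
  · exact fun _ => Subtype.ext (Units.ext rfl)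

theorem isSquare_of_apply_eq [Finite F] {v : F} (hv : φ v = v) : IsSquare v := by
  rcases q.even_or_odd with hq | hq
  · rw [← hv, h.apply_eq_pow]
    exact hq.isSquare_pow v
  rcases eq_or_ne v 0 with rfl | hv0
  · exact IsSquare.zero
  have hcard : Nat.card {z : F // φ z * z = v} ≠ 0 := by
    rw [h.natCard_norm_eq hv hv0]; exact Nat.succ_ne_zero q
  obtain ⟨⟨z, hz⟩⟩ := (Nat.card_ne_zero.1 hcard).1
  rw [← hz, h.apply_eq_pow, ← pow_succ]
  exact hq.add_one.isSquare_pow z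

theorem range_sub_id [Finite F] (h2 : (2 : F) ≠ 0) :
    ((φ : F →+ F) - AddMonoidHom.id F).range = skewSubgroup φ := by
  ext v
  constructor
  · rintro ⟨z, rfl⟩
    simp [mem_skewSubgroup, h.apply_apply]
  · intro hv
    refine ⟨-v / 2, ?_⟩
    have hv : φ v = -v := hv
    simp only [AddMonoidHom.sub_apply, AddMonoidHom.coe_coe, map_div₀, map_neg, hv, map_ofNat,
      AddMonoidHom.id_apply]
    field_simp
    ring

theorem natCard_skewSubgroup [Finite F] {κ : F} (hκ : φ κ = -κ) (hκ0 : κ ≠ 0)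
    (h2 : (2 : F) ≠ 0) : Nat.card (skewSubgroup φ) = q := by
  have hfixed : Nat.card {x : F // φ x - x = 0} = Nat.card (skewSubgroup φ) := by
    refine Nat.card_congr ((Equiv.mulLeft₀ κ hκ0).subtypeEquiv fun x => ?_)
    rw [sub_eq_zero, Equiv.mulLeft₀_apply, mem_skewSubgroup, map_mul, hκ, neg_mul, neg_inj,
      mul_right_inj' hκ0]
  have hker := natCard_range_mul_natCard_fiber ((φ : F →+ F) - AddMonoidHom.id F) 0
  rw [h.range_sub_id h2, map_zero] at hker
  simp only [AddMonoidHom.sub_apply, AddMonoidHom.coe_coe, AddMonoidHom.id_apply, hfixed,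
    h.natCard_eq, ← sq] at hker
  exact Nat.pow_left_injective two_ne_zero hker

theorem natCard_sub_id_eq [Finite F] {κ : F} (hκ : φ κ = -κ) (hκ0 : κ ≠ 0) (h2 : (2 : F) ≠ 0)
    {v : F} (hv : φ v = -v) : Nat.card {z : F // φ z - z = v} = q := by
  obtain ⟨z, rfl⟩ : v ∈ ((φ : F →+ F) - AddMonoidHom.id F).range := h.range_sub_id h2 ▸ hv
  have hfiber := natCard_range_mul_natCard_fiber ((φ : F →+ F) - AddMonoidHom.id F) z
  rw [h.range_sub_id h2, h.natCard_skewSubgroup hκ hκ0 h2, h.natCard_eq, sq] at hfiber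
  exact Nat.eq_of_mul_eq_mul_left h.one_lt.pos hfiber

end IsFrobeniusInvolution

end Involution

section SkewForm

variable {F : Type*} [Field F] {q : ℕ} {φ : F →+* F} {α γ κ : F}

/-- With `φ` the involution `x ↦ x^q` and `γ = β^q - β`, the contribution
`α^q x^(2q) - α x^2 - (β^q - β) x^(q+1)` of one coordinate to the affine equation of the
hypersurface. -/
def skewForm (φ : F →+* F) (α γ x : F) : F :=
  φ α * φ x ^ 2 - α * x ^ 2 - γ * (φ x * x)

/-- `κ` is a skew simple root of `X² + γ X - α φ(α)`. Such a root factors `skewForm φ α γ` through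
the norm `z ↦ φ z * z`, see `IsSkewRoot.norm_eq`. -/
structure IsSkewRoot (φ : F →+* F) (α γ κ : F) : Prop where
  skew : φ κ = -κ
  ne_zero : κ ≠ 0
  root : κ ^ 2 + γ * κ = α * φ α
  simple : 2 * κ + γ ≠ 0

theorem two_ne_zero_of_forall_sq_ne (hγ : φ γ = -γ)
    (hD : ∀ t, φ t = t → t ^ 2 ≠ 4 * (α * φ α) + γ ^ 2) : (2 : F) ≠ 0 := by
  intro h2
  have hfix : φ γ = γ := by linear_combination hγ - γ * h2
  exact hD γ hfix (by linear_combination (-2 * (α * φ α)) * h2)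

theorem exists_isSkewRoot [Finite F] (h : IsFrobeniusInvolution φ q) (h2 : (2 : F) ≠ 0)
    (hγ : φ γ = -γ) (hD : ∀ t, φ t = t → t ^ 2 ≠ 4 * (α * φ α) + γ ^ 2) :
    ∃ κ, IsSkewRoot φ α γ κ := by
  have hDfix : φ (4 * (α * φ α) + γ ^ 2) = 4 * (α * φ α) + γ ^ 2 := by
    simp only [map_add, map_mul, map_pow, map_ofNat, h.apply_apply, hγ]
    ring
  obtain ⟨s, hs⟩ := h.isSquare_of_apply_eq hDfix
  rw [← sq] at hs
  have hs_skew : φ s = -s := by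
    have hsq : φ s ^ 2 = s ^ 2 := by rw [← map_pow, ← hs, hDfix]
    exact (sq_eq_sq_iff_eq_or_eq_neg.1 hsq).resolve_left fun hfix => hD s hfix hs.symm
  have hs0 : s ≠ 0 := fun h0 => hD s (by rw [h0, map_zero]) hs.symm
  obtain ⟨t, ht_skew, ht0, htγ, ht⟩ :
      ∃ t, φ t = -t ∧ t ≠ 0 ∧ t ≠ γ ∧ 4 * (α * φ α) + γ ^ 2 = t ^ 2 := by
    by_cases hsγ : s = γ
    · refine ⟨-s, by rw [map_neg, hs_skew], neg_ne_zero.2 hs0, fun hneg => hs0 ?_,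
        by rw [neg_sq, hs]⟩
      exact (mul_eq_zero.1 (by linear_combination hsγ - hneg : 2 * s = 0)).resolve_left h2
    · exact ⟨s, hs_skew, hs0, hsγ, hs⟩
  refine ⟨(t - γ) / 2, ?_, div_ne_zero (sub_ne_zero.2 htγ) h2, ?_, ?_⟩
  · rw [map_div₀, map_sub, ht_skew, hγ, map_ofNat]
    ring
  · field_simp
    linear_combination -ht
  · rwa [mul_div_cancel₀ _ h2, sub_add_cancel]

namespace IsSkewRoot

variable (hκ : IsSkewRoot φ α γ κ)
include hκ

theorem map_gamma (hφ : ∀ x, φ (φ x) = x) : φ γ = -γ := by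
  have hroot := congrArg φ hκ.root
  simp only [map_add, map_pow, map_mul, hκ.skew, hφ] at hroot
  refine mul_right_cancel₀ hκ.ne_zero ?_
  linear_combination -hroot + hκ.root

theorem norm_eq (hφ : ∀ x, φ (φ x) = x) (x : F) :
    φ (κ * φ x - α * x) * (κ * φ x - α * x) = -κ * skewForm φ α γ x := by
  simp only [skewForm, map_sub, map_mul, hκ.skew, hφ]
  linear_combination (-(x * φ x)) * hκ.root

theorem bijective [Finite F] (hφ : ∀ x, φ (φ x) = x) :
    Function.Bijective fun x => κ * φ x - α * x := by
  let f : F →+ F := (AddMonoidHom.mulLeft κ).comp (φ : F →+ F) - AddMonoidHom.mulLeft α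
  refine (Finite.injective_iff_bijective (f := f)).1 <|
    (injective_iff_map_eq_zero f).2 fun x hx => ?_
  have hx : κ * φ x - α * x = 0 := hx
  have hφx := congrArg φ hx
  simp only [map_sub, map_mul, map_zero, hκ.skew, hφ] at hφx
  have hprod : κ * (2 * κ + γ) * x = 0 := by
    linear_combination -κ * hφx - φ α * hx + x * hκ.root
  exact (mul_eq_zero.1 hprod).resolve_left (mul_ne_zero hκ.ne_zero hκ.simple)

theorem hasExcess_skewForm [Finite F] [DecidableEq F] (h : IsFrobeniusInvolution φ q)
    (h2 : (2 : F) ≠ 0) : HasExcess (skewSubgroup φ) (skewForm φ α γ) (-q) where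
  mem x := by
    simp only [mem_skewSubgroup, skewForm, map_sub, map_mul, map_pow, h.apply_apply,
      hκ.map_gamma h.apply_apply]
    ring
  card_fiber d hd := by
    have hnorm : Nat.card {x // skewForm φ α γ x = d} = Nat.card {z // φ z * z = -κ * d} := by
      refine Nat.card_congr <|
        (Equiv.ofBijective _ (hκ.bijective h.apply_apply)).subtypeEquiv fun x => ?_
      rw [Equiv.ofBijective_apply, hκ.norm_eq h.apply_apply,
        mul_right_inj' (neg_ne_zero.2 hκ.ne_zero)]
    rw [hnorm, h.natCard_skewSubgroup hκ.skew hκ.ne_zero h2, h.natCard_eq]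
    split_ifs with hd0
    · rw [hd0, mul_zero]
      simp only [mul_eq_zero, map_eq_zero, or_self, Nat.card_unique]
      push_cast
      ring
    · rw [h.natCard_norm_eq _ (mul_ne_zero (neg_ne_zero.2 hκ.ne_zero) hd0)]
      · push_cast
        ring
      · rw [map_mul, map_neg, hκ.skew, mem_skewSubgroup.1 hd]
        ring

theorem exists_skewForm_add_eq (hφ : ∀ x, φ (φ x) = x) (e : F) :
    ∃ y, ∀ x, skewForm φ α γ x + (φ e * φ x - e * x)
      = skewForm φ α γ (x + y) - skewForm φ α γ y := by
  have hγ := hκ.map_gamma hφ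
  obtain ⟨y, hy⟩ : ∃ y, 2 * α * y + γ * φ y = e := by
    refine ⟨(2 * φ α * e - γ * φ e) / (2 * κ + γ) ^ 2, ?_⟩
    have hs := hκ.simple
    simp only [map_add, map_mul, map_div₀, map_sub, map_pow, map_ofNat, hφ, hκ.skew, hγ]
    rw [show 2 * -κ + -γ = -(2 * κ + γ) by ring, neg_sq]
    field_simp
    linear_combination (-4 * e) * hκ.root
  have hφy := congrArg φ hy
  simp only [map_add, map_mul, map_ofNat, hφ, hγ] at hφy
  refine ⟨y, fun x => ?_⟩
  simp only [skewForm, map_add]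
  linear_combination (-φ x) * hφy + x * hy

end IsSkewRoot

end SkewForm

section Affine

variable {F : Type*} [Field F] [Finite F] {q : ℕ} {φ : F →+* F} {α γ κ : F}

theorem natCard_affine_flat (h : IsFrobeniusInvolution φ q) (h2 : (2 : F) ≠ 0)
    (hκ : IsSkewRoot φ α γ κ) {m : ℕ} (P : (Fin m → F) → Prop) :
    Nat.card {p : (Fin m → F) × F // P p.1 ∧ φ p.2 - p.2 + ∑ i, skewForm φ α γ (p.1 i) = 0}
      = q * Nat.card {x // P x} := by
  classical
  refine natCard_subtype_and (P := P)
    (R := fun x z => φ z - z + ∑ i, skewForm φ α γ (x i) = 0) fun x _ => ?_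
  have hskew := ((hκ.hasExcess_skewForm h h2).sum_pi m).mem x
  simp only [← eq_neg_iff_add_eq_zero]
  exact h.natCard_sub_id_eq hκ.skew hκ.ne_zero h2 (neg_mem hskew)

theorem exists_sum_skewForm_translate (h : IsFrobeniusInvolution φ q) (h2 : (2 : F) ≠ 0)
    (hκ : IsSkewRoot φ α γ κ) {m : ℕ} (w : F) (e : Fin m → F) :
    ∃ y : Fin m → F, ∃ d ∈ skewSubgroup φ, ∀ x : Fin m → F,
      φ (w + e ⬝ᵥ x) - (w + e ⬝ᵥ x) + ∑ i, skewForm φ α γ (x i)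
        = ∑ i, skewForm φ α γ (x i + y i) - d := by
  classical
  choose y hy using fun i => hκ.exists_skewForm_add_eq h.apply_apply (e i)
  refine ⟨y, ∑ i, skewForm φ α γ (y i) - (φ w - w), sub_mem ?_ ?_, fun x => ?_⟩
  · exact ((hκ.hasExcess_skewForm h h2).sum_pi m).mem y
  · exact h.range_sub_id h2 ▸ ⟨w, rfl⟩
  · have hsum := Finset.sum_congr (rfl : Finset.univ = Finset.univ) fun i _ => hy i (x i)
    simp only [Finset.sum_add_distrib, Finset.sum_sub_distrib] at hsum
    simp only [map_add, dotProduct, map_sum, map_mul]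
    linear_combination hsum

theorem mul_natCard_affine_transversal (h : IsFrobeniusInvolution φ q) (h2 : (2 : F) ≠ 0)
    (hκ : IsSkewRoot φ α γ κ) {m : ℕ} (a : F) (b : Fin m → F) {c : F} (hc : c ≠ 0) :
    ∃ δ : ℤ, (δ = 0 ∨ δ = 1) ∧
      (q : ℤ) * Nat.card {p : (Fin m → F) × F // a + b ⬝ᵥ p.1 + c * p.2 = 0 ∧
          φ p.2 - p.2 + ∑ i, skewForm φ α γ (p.1 i) = 0}
        = q ^ (2 * m) + (-q) ^ m * (q * δ - 1) := by
  classical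
  obtain ⟨y, d, hd, hyd⟩ := exists_sum_skewForm_translate h h2 hκ (-c⁻¹ * a) (-c⁻¹ • b)
  have hsolve (x : Fin m → F) (z : F) :
      a + b ⬝ᵥ x + c * z = 0 ↔ z = -c⁻¹ * a + (-c⁻¹ • b) ⬝ᵥ x := by
    rw [smul_dotProduct, smul_eq_mul, ← mul_add, neg_mul, ← mul_neg, eq_inv_mul_iff_mul_eq₀ hc,
      eq_neg_iff_add_eq_zero, add_comm]
  have hcount : Nat.card {p : (Fin m → F) × F // a + b ⬝ᵥ p.1 + c * p.2 = 0 ∧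
      φ p.2 - p.2 + ∑ i, skewForm φ α γ (p.1 i) = 0}
      = Nat.card {x : Fin m → F // ∑ i, skewForm φ α γ (x i) = d} := by
    simp only [hsolve]
    rw [natCard_graph (fun x : Fin m → F => -c⁻¹ * a + (-c⁻¹ • b) ⬝ᵥ x)
      fun x z => φ z - z + ∑ i, skewForm φ α γ (x i) = 0]
    refine Nat.card_congr ((Equiv.addRight y).subtypeEquiv fun x => ?_)
    rw [hyd, sub_eq_zero]
    rfl
  refine ⟨if d = 0 then 1 else 0, by split_ifs <;> simp, ?_⟩
  have hfiber := ((hκ.hasExcess_skewForm h h2).sum_pi m).card_fiber d hd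
  rw [h.natCard_skewSubgroup hκ.skew hκ.ne_zero h2, Nat.card_fun, h.natCard_eq, Nat.card_fin]
    at hfiber
  rw [hcount, hfiber, pow_mul, Nat.cast_pow, Nat.cast_pow]

end Affine

section ProjectiveCounting

variable {F V : Type*} [Field F] [AddCommGroup V] [Module F V] [Finite V]

theorem natCard_projectivization_mul {P : V → Prop} (hP : ∀ c : F, c ≠ 0 → ∀ v, P (c • v) ↔ P v)
    (hP0 : P 0) :
    Nat.card {x : Projectivization F V // P x.rep} * (Nat.card F - 1) + 1
      = Nat.card {v // P v} := by
  classical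
  let scale (s : {x : Projectivization F V // P x.rep} × Fˣ) :
      {v : {v // P v} // v ≠ ⟨0, hP0⟩} :=
    ⟨⟨s.2.1 • s.1.1.rep, (hP _ s.2.ne_zero _).2 s.1.2⟩, fun h0 =>
      smul_ne_zero s.2.ne_zero s.1.1.rep_nonzero (congrArg Subtype.val h0)⟩
  have hscale : Function.Bijective scale := by
    constructor
    · rintro ⟨⟨x, hx⟩, c⟩ ⟨⟨y, hy⟩, d⟩ hxy
      have hxy : c • x.rep = d • y.rep := congrArg (fun v => v.1.1) hxy
      obtain rfl : x = y := by
        rw [← x.mk_rep, ← y.mk_rep, Projectivization.mk_eq_mk_iff]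
        exact ⟨c⁻¹ * d, by rw [mul_smul, ← hxy, inv_smul_smul]⟩
      rw [Units.ext (smul_left_injective F x.rep_nonzero hxy)]
    · rintro ⟨⟨v, hv⟩, hv0⟩
      have hv0 : v ≠ 0 := fun h0 => hv0 (Subtype.ext h0)
      obtain ⟨c, hc⟩ := Projectivization.exists_smul_eq_mk_rep F v hv0
      refine ⟨(⟨.mk F v hv0, hc ▸ (hP _ c.ne_zero v).2 hv⟩, c⁻¹), Subtype.ext (Subtype.ext ?_)⟩
      change c⁻¹ • (Projectivization.mk F v hv0).rep = v
      rw [← hc, inv_smul_smul]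
  rw [← Nat.card_units, ← Nat.card_prod, Nat.card_congr (Equiv.ofBijective scale hscale),
    ← Finite.card_option, Nat.card_congr (Equiv.optionSubtypeNe _)]

theorem natCard_prod_cone [Finite F] {P : F × V → Prop}
    (hP : ∀ c : F, c ≠ 0 → ∀ v, P (c • v) ↔ P v) :
    Nat.card {v // P v}
      = Nat.card {y // P (0, y)} + (Nat.card F - 1) * Nat.card {y // P (1, y)} := by
  classical
  have := Fintype.ofFinite F
  have hslice (t : F) (ht : t ≠ 0) : Nat.card {y // P (t, y)} = Nat.card {y // P (1, y)} :=
    (Nat.card_congr ((MulAction.toPerm (Units.mk0 t ht)).subtypeEquiv fun y => by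
      simpa [Units.smul_def] using (hP t ht (1, y)).symm)).symm
  rw [natCard_subtype_prod fun t y => P (t, y),
    ← Finset.add_sum_erase _ _ (Finset.mem_univ (0 : F)),
    Finset.sum_congr rfl fun t ht => hslice t (Finset.ne_of_mem_erase ht), Finset.sum_const,
    Finset.card_erase_of_mem (Finset.mem_univ (0 : F)), Finset.card_univ, smul_eq_mul,
    Nat.card_eq_fintype_card (α := F)]

end ProjectiveCounting

section Coordinates

variable {F : Type*} [Field F] {m : ℕ}

/-- Homogeneous coordinates of `PG(m + 1, F)`, split as `(t, x, z)` with `t` the coordinate defining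
the hyperplane at infinity and `z` the distinguished last coordinate. -/
def homCoords (F : Type*) [Field F] (m : ℕ) :
    (F × (Fin m → F) × F) ≃ₗ[F] (Fin (m + 1 + 1) → F) where
  toFun w := Fin.cons w.1 (Fin.snoc w.2.1 w.2.2 : Fin (m + 1) → F)
  invFun v := (v 0, (fun i => v i.castSucc.succ), v (Fin.last m).succ)
  left_inv w := by simp
  right_inv v := by
    ext i
    refine Fin.cases ?_ (Fin.lastCases ?_ fun i => ?_) i <;> simp
  map_add' w w' := by
    ext i
    refine Fin.cases ?_ (Fin.lastCases ?_ fun i => ?_) i <;> simp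
  map_smul' c w := by
    ext i
    refine Fin.cases ?_ (Fin.lastCases ?_ fun i => ?_) i <;> simp

variable (t : F) (x : Fin m → F) (z : F)

@[simp]
theorem homCoords_zero : homCoords F m (t, x, z) 0 = t := rfl

@[simp]
theorem homCoords_castSucc_succ (i : Fin m) : homCoords F m (t, x, z) i.castSucc.succ = x i := by
  simp [homCoords]

@[simp]
theorem homCoords_last : homCoords F m (t, x, z) (Fin.last (m + 1)) = z := by
  rw [← Fin.succ_last]
  simp [homCoords]

theorem exists_dual_homCoords_eq (f : Module.Dual F (Fin (m + 1 + 1) → F)) :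
    ∃ (a : F) (b : Fin m → F) (c : F), ∀ t x z,
      f (homCoords F m (t, x, z)) = a * t + b ⬝ᵥ x + c * z := by
  let g := f ∘ₗ (homCoords F m).toLinearMap
  refine ⟨g (1, 0, 0), (dotProductEquiv F (Fin m)).symm
    (g ∘ₗ .inr F F _ ∘ₗ .inl F _ F), g (0, 0, 1), fun t x z => ?_⟩
  have hsplit : (t, x, z) = t • ((1, 0, 0) : F × (Fin m → F) × F) + (0, x, 0) + z • (0, 0, 1) := by
    simp
  change g (t, x, z) = _
  rw [hsplit, map_add, map_add, map_smul, map_smul, smul_eq_mul, smul_eq_mul, mul_comm t,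
    mul_comm z, ← dotProductEquiv_apply_apply, LinearEquiv.apply_symm_apply]
  rfl

theorem sum_ite_middle {A : Type*} [AddCommMonoid A] (g : Fin (m + 1 + 1) → A) :
    (∑ i : Fin (m + 1 + 1), if 1 ≤ i.1 ∧ i.1 < m + 1 then g i else 0)
      = ∑ i : Fin m, g i.castSucc.succ := by
  rw [Fin.sum_univ_succ, Fin.sum_univ_castSucc]
  simp

theorem affEq_iff {q : ℕ} {φ : F →+* F} (hφ : ∀ x, φ x = x ^ q) (α β : F)
    (v : Fin (m + 1 + 1) → F) : affEq q (m + 1) α β v ↔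
      φ (v (Fin.last (m + 1))) - v (Fin.last (m + 1))
        + ∑ i : Fin m, skewForm φ α (φ β - β) (v i.castSucc.succ) = 0 := by
  simp only [affEq, skewForm, sum_ite_middle, Finset.sum_sub_distrib, ← Finset.mul_sum, hφ,
    pow_mul', pow_succ, pow_zero, one_mul]
  constructor <;> intro h <;> linear_combination h

/-- The affine cone over `Bset`: the condition defining `Bset`, imposed on an arbitrary vector of
homogeneous coordinates instead of the chosen representative of a point. -/
def BsetCone (q r : ℕ) (α β : F) (v : Fin (r + 1) → F) : Prop :=
  (v 0 ≠ 0 ∧ affEq q r α β fun i => v i / v 0) ∨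
    (v 0 = 0 ∧ (∑ i : Fin (r + 1), if 1 ≤ i.1 ∧ i.1 < r then v i ^ 2 else 0) = 0)

variable {q : ℕ} {φ : F →+* F} (α β : F)

theorem bsetCone_smul_iff {c : F} (hc : c ≠ 0) (v : Fin (m + 1 + 1) → F) :
    BsetCone q (m + 1) α β (c • v) ↔ BsetCone q (m + 1) α β v := by
  simp only [BsetCone, sum_ite_middle, Pi.smul_apply, smul_eq_mul, mul_pow, ← Finset.mul_sum]
  simp [hc, mul_div_mul_left]

theorem bsetCone_homCoords_zero_iff :
    BsetCone q (m + 1) α β (homCoords F m (0, x, z)) ↔ x ⬝ᵥ x = 0 := by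
  simp only [BsetCone, sum_ite_middle]
  simp [dotProduct, sq]

theorem bsetCone_homCoords_one_iff (hφ : ∀ x, φ x = x ^ q) :
    BsetCone q (m + 1) α β (homCoords F m (1, x, z)) ↔
      φ z - z + ∑ i, skewForm φ α (φ β - β) (x i) = 0 := by
  simp [BsetCone, affEq_iff hφ]

theorem natCard_Bset_inter_mul [Finite F] (hφ : ∀ x, φ x = x ^ q)
    {f : Module.Dual F (Fin (m + 1 + 1) → F)} {a : F} {b : Fin m → F} {c : F}
    (hf : ∀ t x z, f (homCoords F m (t, x, z)) = a * t + b ⬝ᵥ x + c * z) :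
    Nat.card ↥(Bset F q (m + 1) α β ∩ {P | f P.rep = 0}) * (Nat.card F - 1) + 1
      = Nat.card {p : (Fin m → F) × F // p.1 ⬝ᵥ p.1 = 0 ∧ b ⬝ᵥ p.1 + c * p.2 = 0}
        + (Nat.card F - 1) * Nat.card {p : (Fin m → F) × F // a + b ⬝ᵥ p.1 + c * p.2 = 0 ∧
            φ p.2 - p.2 + ∑ i, skewForm φ α (φ β - β) (p.1 i) = 0} := by
  let P (v : Fin (m + 1 + 1) → F) : Prop := f v = 0 ∧ BsetCone q (m + 1) α β v
  have hsmul (c : F) (hc : c ≠ 0) (v) : P (c • v) ↔ P v := by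
    simp [P, bsetCone_smul_iff α β hc, hc]
  have hzero (p : (Fin m → F) × F) :
      P (homCoords F m (0, p)) ↔ p.1 ⬝ᵥ p.1 = 0 ∧ b ⬝ᵥ p.1 + c * p.2 = 0 := by
    obtain ⟨x, z⟩ := p
    simp only [P, hf, bsetCone_homCoords_zero_iff, mul_zero, zero_add, and_comm]
  have hone (p : (Fin m → F) × F) : P (homCoords F m (1, p)) ↔ a + b ⬝ᵥ p.1 + c * p.2 = 0 ∧
      φ p.2 - p.2 + ∑ i, skewForm φ α (φ β - β) (p.1 i) = 0 := by
    obtain ⟨x, z⟩ := p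
    simp only [P, hf, bsetCone_homCoords_one_iff _ _ α β hφ, mul_one]
  have horigin : P 0 := by
    rw [← map_zero (homCoords F m)]
    exact (hzero 0).2 (by simp)
  have hBset : Nat.card ↥(Bset F q (m + 1) α β ∩ {P | f P.rep = 0})
      = Nat.card {x : Projectivization F (Fin (m + 1 + 1) → F) // P x.rep} := by
    rw [Set.inter_comm]
    rfl
  have hcoords : Nat.card {v // P v} = Nat.card {w // P (homCoords F m w)} :=
    (Nat.card_congr ((homCoords F m).toEquiv.subtypeEquiv fun _ => Iff.rfl)).symm
  rw [hBset, natCard_projectivization_mul hsmul horigin, hcoords,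
    natCard_prod_cone fun c hc w => by rw [map_smul, hsmul c hc]]
  simp only [hzero, hone]

end Coordinates

section Sections

variable {F : Type*} [Field F] {q : ℕ} {φ : F →+* F} {α β κ : F}

/-- The number of points of `PG(n - 1, q ^ 2)`. -/
def numPoints (q n : ℕ) : ℕ := ∑ i ∈ Finset.range n, (q ^ 2) ^ i

theorem numPoints_mul_add_one (q n : ℕ) : numPoints q n * (q ^ 2 - 1 : ℤ) + 1 = q ^ (2 * n) := by
  have hgeom := geom_sum_mul ((q : ℤ) ^ 2) n
  rw [← pow_mul] at hgeom
  push_cast [numPoints]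
  linear_combination hgeom

theorem numPoints_succ (q n : ℕ) : numPoints q (n + 1) = q ^ 2 * numPoints q n + 1 :=
  geom_sum_succ

theorem pow_sub_one_div_eq_numPoints (hq : 1 < q) (n : ℕ) :
    (q ^ (2 * n) - 1) / (q ^ 2 - 1) = numPoints q n := by
  rw [numPoints, Nat.geomSum_eq (one_lt_pow₀ hq two_ne_zero), pow_mul]

theorem pow_sub_sq_div_add_one_eq_numPoints (hq : 1 < q) {n : ℕ} (hn : n ≠ 0) :
    (q ^ (2 * n) - q ^ 2) / (q ^ 2 - 1) + 1 = numPoints q n := by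
  obtain ⟨n, rfl⟩ := Nat.exists_eq_succ_of_ne_zero hn
  have hfactor : q ^ (2 * (n + 1)) - q ^ 2 = q ^ 2 * (q ^ (2 * n) - 1) := by
    rw [Nat.mul_sub_one, ← pow_add, mul_add_one, add_comm]
  have hdvd : q ^ 2 - 1 ∣ q ^ (2 * n) - 1 := pow_mul q 2 n ▸ Nat.sub_one_dvd_pow_sub_one _ n
  rw [numPoints_succ, Nat.succ_eq_add_one, hfactor, Nat.mul_div_assoc _ hdvd,
    pow_sub_one_div_eq_numPoints hq]

theorem natCard_infinity_transversal {m : ℕ} (b : Fin m → F) {c : F} (hc : c ≠ 0) :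
    Nat.card {p : (Fin m → F) × F // p.1 ⬝ᵥ p.1 = 0 ∧ b ⬝ᵥ p.1 + c * p.2 = 0}
      = Nat.card {x : Fin m → F // x ⬝ᵥ x = 0} := by
  have hsolve (x : Fin m → F) (z : F) : b ⬝ᵥ x + c * z = 0 ↔ z = c⁻¹ * -(b ⬝ᵥ x) := by
    rw [eq_inv_mul_iff_mul_eq₀ hc, eq_neg_iff_add_eq_zero, add_comm]
  simp only [hsolve, and_comm]
  exact natCard_graph (fun x : Fin m → F => c⁻¹ * -(b ⬝ᵥ x)) fun x _ => x ⬝ᵥ x = 0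

variable [Finite F]

theorem natCard_Bset_inter_eq_numPoints_add (h : IsFrobeniusInvolution φ q) {m n : ℕ} {e : ℤ}
    {f : Module.Dual F (Fin (m + 1 + 1) → F)} {a : F} {b : Fin m → F} {c : F}
    (hf : ∀ t x z, f (homCoords F m (t, x, z)) = a * t + b ⬝ᵥ x + c * z)
    (hinf : (Nat.card {p : (Fin m → F) × F // p.1 ⬝ᵥ p.1 = 0 ∧ b ⬝ᵥ p.1 + c * p.2 = 0} : ℤ)
      = q ^ (2 * n) + (q ^ 2 - 1) * e) :
    (Nat.card ↥(Bset F q (m + 1) α β ∩ {P | f P.rep = 0}) : ℤ)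
      = numPoints q n + e + Nat.card {p : (Fin m → F) × F // a + b ⬝ᵥ p.1 + c * p.2 = 0 ∧
          φ p.2 - p.2 + ∑ i, skewForm φ α (φ β - β) (p.1 i) = 0} := by
  have hcount := congrArg (Nat.cast : ℕ → ℤ)
    (natCard_Bset_inter_mul α β h.apply_eq_pow hf)
  have hQ : 1 < q ^ 2 := one_lt_pow₀ h.one_lt two_ne_zero
  rw [h.natCard_eq] at hcount
  push_cast [hQ.le, hinf] at hcount
  have hne : (q : ℤ) ^ 2 - 1 ≠ 0 := sub_ne_zero.2 (mod_cast hQ.ne')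
  apply mul_right_cancel₀ hne
  linear_combination hcount - numPoints_mul_add_one q n

theorem natCard_isotropic (h : IsFrobeniusInvolution φ q) (h2 : (2 : F) ≠ 0)
    (hneg : IsSquare (-1 : F)) (k : ℕ) :
    Nat.card {x : Fin (2 * k + 1) → F // x ⬝ᵥ x = 0} = q ^ (2 * (2 * k)) := by
  classical
  have := Fintype.ofFinite F
  have hzero := natCard_dotProduct_self_eq h2 hneg k 0
  rw [quadraticChar_zero, mul_zero, add_zero, h.natCard_eq, Nat.cast_pow, ← pow_mul] at hzero
  exact_mod_cast hzero

theorem natCard_infinity_flat (h : IsFrobeniusInvolution φ q) {m : ℕ} (b : Fin m → F) :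
    Nat.card {p : (Fin m → F) × F // p.1 ⬝ᵥ p.1 = 0 ∧ b ⬝ᵥ p.1 + 0 * p.2 = 0}
      = q ^ 2 * Nat.card {x // x ⬝ᵥ x = 0 ∧ b ⬝ᵥ x = 0} := by
  simp only [zero_mul, add_zero]
  simpa [h.natCard_eq] using natCard_subtype_and (X := Fin m → F) (Y := F)
    (P := fun x => x ⬝ᵥ x = 0 ∧ b ⬝ᵥ x = 0) (R := fun _ _ => True) fun _ _ => rfl

variable (h : IsFrobeniusInvolution φ q) (h2 : (2 : F) ≠ 0) (hneg : IsSquare (-1 : F))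
  (hκ : IsSkewRoot φ α (φ β - β) κ) {k : ℕ} {f : Module.Dual F (Fin (2 * k + 1 + 1 + 1) → F)}
  {a : F} {b : Fin (2 * k + 1) → F} {c : F}
include h h2 hneg

theorem natCard_Bset_inter_const
    (hf : ∀ t x z, f (homCoords F (2 * k + 1) (t, x, z)) = a * t) :
    Nat.card ↥(Bset F q (2 * k + 1 + 1) α β ∩ {P | f P.rep = 0})
      = numPoints q (2 * k + 1) + Nat.card {p : (Fin (2 * k + 1) → F) × F // a = 0 ∧
          φ p.2 - p.2 + ∑ i, skewForm φ α (φ β - β) (p.1 i) = 0} := by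
  have hf' (t x z) : f (homCoords F (2 * k + 1) (t, x, z)) = a * t + 0 ⬝ᵥ x + 0 * z := by
    rw [hf, zero_dotProduct, zero_mul, add_zero, add_zero]
  have hinf : (Nat.card {p : (Fin (2 * k + 1) → F) × F //
      p.1 ⬝ᵥ p.1 = 0 ∧ 0 ⬝ᵥ p.1 + 0 * p.2 = 0} : ℤ)
      = q ^ (2 * (2 * k + 1)) + (q ^ 2 - 1) * 0 := by
    rw [natCard_infinity_flat h]
    simp only [zero_dotProduct, and_true, natCard_isotropic h h2 hneg]
    push_cast
    ring
  have hcount := natCard_Bset_inter_eq_numPoints_add (α := α) (β := β) h hf' hinf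
  simp only [zero_dotProduct, zero_mul, add_zero] at hcount
  exact_mod_cast hcount

theorem natCard_Bset_inter_infinity (ha : a ≠ 0)
    (hf : ∀ t x z, f (homCoords F (2 * k + 1) (t, x, z)) = a * t) :
    Nat.card ↥(Bset F q (2 * k + 1 + 1) α β ∩ {P | f P.rep = 0}) = numPoints q (2 * k + 1) := by
  simp [natCard_Bset_inter_const h h2 hneg hf, ha]

include hκ

theorem natCard_Bset :
    Nat.card ↥(Bset F q (2 * k + 1 + 1) α β) = q ^ (4 * k + 3) + numPoints q (2 * k + 1) := by
  have hwhole := natCard_Bset_inter_const (α := α) (β := β) (a := 0) (f := 0) h h2 hneg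
    (k := k) fun _ _ _ => (zero_mul _).symm
  have hall : Nat.card {_x : Fin (2 * k + 1) → F // (0 : F) = 0} = (q ^ 2) ^ (2 * k + 1) := by
    rw [Nat.card_congr (Equiv.subtypeUnivEquiv fun _ => rfl), Nat.card_fun, Nat.card_fin,
      h.natCard_eq]
  rw [natCard_affine_flat h h2 hκ fun _ => (0 : F) = 0, hall] at hwhole
  simp only [LinearMap.zero_apply, Set.ofPred_true, Set.inter_univ] at hwhole
  rw [hwhole]
  ring

theorem natCard_Bset_inter_flat (hb : b ≠ 0)
    (hf : ∀ t x z, f (homCoords F (2 * k + 1) (t, x, z)) = a * t + b ⬝ᵥ x + 0 * z) :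
    ∃ ε : ℤ, (ε = 0 ∨ ε = 1 ∨ ε = -1) ∧
      (Nat.card ↥(Bset F q (2 * k + 1 + 1) α β ∩ {P | f P.rep = 0}) : ℤ)
        = q ^ (4 * k + 1) + numPoints q (2 * k) + ε * q ^ (2 * k) := by
  classical
  have := Fintype.ofFinite F
  have hinf : (Nat.card {p : (Fin (2 * k + 1) → F) × F //
      p.1 ⬝ᵥ p.1 = 0 ∧ b ⬝ᵥ p.1 + 0 * p.2 = 0} : ℤ)
      = q ^ (2 * (2 * k)) + (q ^ 2 - 1) * (quadraticChar F (b ⬝ᵥ b) * q ^ (2 * k)) := by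
    have hquadric := card_mul_natCard_isotropic_orthogonal_odd h2 hneg k hb
    rw [natCard_infinity_flat h]
    push_cast [h.natCard_eq] at hquadric ⊢
    linear_combination hquadric
  have haff : Nat.card {p : (Fin (2 * k + 1) → F) × F // a + b ⬝ᵥ p.1 + 0 * p.2 = 0 ∧
      φ p.2 - p.2 + ∑ i, skewForm φ α (φ β - β) (p.1 i) = 0} = q ^ (4 * k + 1) := by
    have hb' : dotProductEquiv F (Fin (2 * k + 1)) b ≠ 0 := by simpa
    have hplane := natCard_mul_natCard_dual_fiber hb' (-a)
    simp only [dotProductEquiv_apply_apply, h.natCard_eq, Nat.card_fun, Nat.card_fin,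
      eq_neg_iff_add_eq_zero, add_comm _ a] at hplane
    simp only [zero_mul, add_zero]
    rw [natCard_affine_flat h h2 hκ fun x => a + b ⬝ᵥ x = 0]
    apply Nat.eq_of_mul_eq_mul_left h.one_lt.pos
    linear_combination hplane
  refine ⟨quadraticChar F (b ⬝ᵥ b), quadraticChar_isQuadratic F _, ?_⟩
  rw [natCard_Bset_inter_eq_numPoints_add h hf hinf, haff, Nat.cast_pow]
  ring

theorem natCard_Bset_inter_transversal (hc : c ≠ 0)
    (hf : ∀ t x z, f (homCoords F (2 * k + 1) (t, x, z)) = a * t + b ⬝ᵥ x + c * z) :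
    ∃ δ : ℤ, (δ = 0 ∨ δ = 1) ∧
      (Nat.card ↥(Bset F q (2 * k + 1 + 1) α β ∩ {P | f P.rep = 0}) : ℤ)
        = q ^ (4 * k + 1) + numPoints q (2 * k) + q ^ (2 * k) - δ * q ^ (2 * k + 1) := by
  obtain ⟨δ, hδ, haff⟩ := mul_natCard_affine_transversal h h2 hκ a b hc
  have hinf : (Nat.card {p : (Fin (2 * k + 1) → F) × F //
      p.1 ⬝ᵥ p.1 = 0 ∧ b ⬝ᵥ p.1 + c * p.2 = 0} : ℤ)
      = q ^ (2 * (2 * k)) + (q ^ 2 - 1) * 0 := by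
    rw [natCard_infinity_transversal b hc, natCard_isotropic h h2 hneg, Nat.cast_pow, mul_zero,
      add_zero]
  refine ⟨δ, hδ, mul_left_cancel₀ (Nat.cast_ne_zero.2 h.one_lt.pos.ne' : (q : ℤ) ≠ 0) ?_⟩
  rw [natCard_Bset_inter_eq_numPoints_add h hf hinf]
  rw [Odd.neg_pow ⟨k, rfl⟩] at haff
  linear_combination haff

theorem natCard_Bset_inter (hf0 : f ≠ 0) :
    Nat.card ↥(Bset F q (2 * k + 1 + 1) α β ∩ {P | f P.rep = 0}) = numPoints q (2 * k + 1) ∨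
      ∃ e : ℤ, (e = 0 ∨ e = q ^ (2 * k) ∨ e = -q ^ (2 * k) ∨
          e = q ^ (2 * k) - q ^ (2 * k + 1)) ∧
        (Nat.card ↥(Bset F q (2 * k + 1 + 1) α β ∩ {P | f P.rep = 0}) : ℤ)
          = q ^ (4 * k + 1) + numPoints q (2 * k) + e := by
  obtain ⟨a, b, c, hf⟩ := exists_dual_homCoords_eq f
  rcases eq_or_ne c 0 with rfl | hc
  · rcases eq_or_ne b 0 with rfl | hb
    · simp only [zero_dotProduct, zero_mul, add_zero] at hf
      refine .inl (natCard_Bset_inter_infinity h h2 hneg (fun ha => hf0 ?_) hf)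
      refine LinearMap.ext ((homCoords F (2 * k + 1)).surjective.forall.2 fun ⟨t, x, z⟩ => ?_)
      rw [hf, ha, zero_mul, LinearMap.zero_apply]
    · obtain ⟨ε, hε, hcard⟩ := natCard_Bset_inter_flat h h2 hneg hκ hb hf
      refine .inr ⟨_, ?_, hcard⟩
      rcases hε with rfl | rfl | rfl <;> simp
  · obtain ⟨δ, hδ, hcard⟩ := natCard_Bset_inter_transversal h h2 hneg hκ hc hf
    refine .inr ⟨_, ?_, hcard.trans (add_sub_assoc _ _ _)⟩
    rcases hδ with rfl | rfl <;> simp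

end Sections

theorem statement3_general {F : Type*} [Field F] [Finite F] {q r : ℕ} (hr : 4 ≤ r)
    (hreven : Even r) (hF : Nat.card F = q ^ 2) (α β : F)
    (hcond : ∀ t : F, t ^ q = t → t ^ 2 ≠ 4 * α ^ (q + 1) + (β ^ q - β) ^ 2) :
    Nat.card ↥(Bset F q r α β) =
        q ^ (2 * r - 1) + (q ^ (2 * (r - 1)) - q ^ 2) / (q ^ 2 - 1) + 1 ∧
    ∀ f : Module.Dual F (Fin (r + 1) → F), f ≠ 0 →
      Nat.card ↥(Bset F q r α β ∩ {P | f P.rep = 0}) ∈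
        ({q ^ 2 * ((q ^ (2 * (r - 2)) - 1) / (q ^ 2 - 1)) + 1,
          q ^ (2 * r - 3) - q ^ (r - 1) + q ^ (r - 2) + (q ^ (2 * (r - 2)) - 1) / (q ^ 2 - 1),
          q ^ (2 * r - 3) + (q ^ (2 * (r - 2)) - q ^ 2) / (q ^ 2 - 1) - q ^ (r - 2) + 1,
          q ^ (2 * r - 3) + (q ^ (2 * (r - 2)) - q ^ 2) / (q ^ 2 - 1) + 1,
          q ^ (2 * r - 3) + (q ^ (2 * (r - 2)) - q ^ 2) / (q ^ 2 - 1) + q ^ (r - 2) + 1}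
          : Set ℕ) := by
  obtain ⟨k, rfl, hk⟩ : ∃ k, r = 2 * k + 1 + 1 ∧ 1 ≤ k := by
    obtain ⟨l, rfl⟩ := hreven
    exact ⟨l - 1, by omega, by omega⟩
  obtain ⟨φ, h⟩ := exists_isFrobeniusInvolution hF
  have hγ : φ (φ β - β) = -(φ β - β) := by rw [map_sub, h.apply_apply, neg_sub]
  have hD : ∀ t, φ t = t → t ^ 2 ≠ 4 * (α * φ α) + (φ β - β) ^ 2 := by
    simpa only [h.apply_eq_pow, ← pow_succ'] using hcond
  have h2 := two_ne_zero_of_forall_sq_ne hγ hD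
  obtain ⟨κ, hκ⟩ := exists_isSkewRoot h h2 hγ hD
  have hneg : IsSquare (-1 : F) := h.isSquare_of_apply_eq (by rw [map_neg, map_one])
  have hwhole := pow_sub_sq_div_add_one_eq_numPoints h.one_lt (n := 2 * k + 1) (by omega)
  have hsection := pow_sub_sq_div_add_one_eq_numPoints h.one_lt (n := 2 * k) (by omega)
  have hle : q ^ (2 * k) ≤ q ^ (2 * k + 1) := Nat.pow_le_pow_right h.one_lt.pos (by omega)
  have hle' : q ^ (2 * k + 1) ≤ q ^ (4 * k + 1) := Nat.pow_le_pow_right h.one_lt.pos (by omega)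
  simp only [show 2 * (2 * k + 1 + 1) - 1 = 4 * k + 3 by omega,
    show 2 * (2 * k + 1 + 1) - 3 = 4 * k + 1 by omega, Nat.add_sub_cancel,
    show 2 * k + 1 + 1 - 2 = 2 * k by omega, pow_sub_one_div_eq_numPoints h.one_lt,
    Set.mem_insert_iff, Set.mem_singleton_iff, ← numPoints_succ]
  refine ⟨by rw [natCard_Bset h h2 hneg hκ]; omega, fun f hf0 => ?_⟩
  obtain hcard | ⟨e, rfl | rfl | rfl | rfl, hcard⟩ := natCard_Bset_inter h h2 hneg hκ hf0
  · exact .inl hcard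
  all_goals lia

/-- size and hyperplane intersection numbers of `B` for `q` odd and
`r ≥ 4` even, with `4α^{q+1} + (β^q−β)²` a non-square of the subfield `GF(q)`
(the fixed field of `x ↦ x^q`). -/
theorem statement3 (q r : ℕ) (hq : IsPrimePow q) (hqodd : Odd q)
    (hr : 4 ≤ r) (hreven : Even r)
    (F : Type) [Field F] [Fintype F] (hF : Fintype.card F = q ^ 2)
    (α β : F) (hα : α ≠ 0) (hβ : β ^ q ≠ β)
    (hcond : ∀ t : F, t ^ q = t → t ^ 2 ≠ 4 * α ^ (q + 1) + (β ^ q - β) ^ 2) :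
    Nat.card ↥(Bset F q r α β) =
        q ^ (2 * r - 1) + (q ^ (2 * (r - 1)) - q ^ 2) / (q ^ 2 - 1) + 1 ∧
    ∀ f : Module.Dual F (Fin (r + 1) → F), f ≠ 0 →
      Nat.card ↥(Bset F q r α β ∩ {P | f P.rep = 0}) ∈
        ({q ^ 2 * ((q ^ (2 * (r - 2)) - 1) / (q ^ 2 - 1)) + 1,
          q ^ (2 * r - 3) - q ^ (r - 1) + q ^ (r - 2) + (q ^ (2 * (r - 2)) - 1) / (q ^ 2 - 1),
          q ^ (2 * r - 3) + (q ^ (2 * (r - 2)) - q ^ 2) / (q ^ 2 - 1) - q ^ (r - 2) + 1,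
          q ^ (2 * r - 3) + (q ^ (2 * (r - 2)) - q ^ 2) / (q ^ 2 - 1) + 1,
          q ^ (2 * r - 3) + (q ^ (2 * (r - 2)) - q ^ 2) / (q ^ 2 - 1) + q ^ (r - 2) + 1}
          : Set ℕ) :=
  statement3_general hr hreven (by rw [Nat.card_eq_fintype_card, hF]) α β hcond
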